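/- For every positive integer n, the map pre_2 is injective on the set of partitions of n with exactly five parts. -/

import Mathlib

/-- `preK k P` is the multiset of products of all `k`-element sub-multisets of the
multiset of parts `P`; it is empty when `P` has fewer than `k` elements. -/
def preK (k : ℕ) (P : Multiset ℕ) : Multiset ℕ :=
  (P.powersetCard k).map Multiset.prod

theorem aux_five (s : Multiset ℕ) (h : s.card = 5) (hp : ∀ x ∈ s, 0 < x) :
    ∃ a b c d e : ℕ, s = a ::ₘ b ::ₘ c ::ₘ d ::ₘ e ::ₘ 0 ∧ 0 < a ∧ a ≤ b ∧ b ≤ c ∧ c ≤ d ∧ d ≤ e := by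
  have h1 := Multiset.pairwise_sort s (· ≤ ·)
  have h2 := Multiset.sort_eq s (· ≤ ·)
  generalize Multiset.sort s (· ≤ ·) = l at h1 h2
  subst h2
  match l, h, h1, hp with
  | [a, b, c, d, e], _, h1, hp =>
    refine ⟨a, b, c, d, e, rfl, hp a (by simp), ?_⟩
    simp at h1
    omega

theorem aux_pre (a b c d e : ℕ) :
    preK 2 (a ::ₘ b ::ₘ c ::ₘ d ::ₘ e ::ₘ 0) =
      (a*b) ::ₘ (a*c) ::ₘ (d*e) ::ₘ (c*e) ::ₘ (a*d) ::ₘ (a*e) ::ₘ (b*c) ::ₘ (b*d) ::ₘ (b*e)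
        ::ₘ (c*d) ::ₘ 0 := by
  simp only [preK, Multiset.powersetCard_cons 1, Multiset.powersetCard_one,
    Multiset.powersetCard_zero_right, Multiset.map_add, Multiset.map_map, Multiset.map_cons,
    Multiset.map_zero, Function.comp, Multiset.prod_cons, Multiset.prod_singleton]
  simp only [← Multiset.singleton_add, add_zero, zero_add]
  abel

theorem aux_min {x y : ℕ} {S T : Multiset ℕ} (h : x ::ₘ S = y ::ₘ T)
    (hx : ∀ z ∈ S, x ≤ z) (hy : ∀ z ∈ T, y ≤ z) : x = y ∧ S = T := by
  have e : x = y := by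
    have h1 : x ∈ y ::ₘ T := h ▸ Multiset.mem_cons_self x S
    have h2 : y ∈ x ::ₘ S := h ▸ Multiset.mem_cons_self y T
    rcases Multiset.mem_cons.1 h1 with h1 | h1
    · exact h1
    · rcases Multiset.mem_cons.1 h2 with h2 | h2
      · exact h2.symm
      · exact le_antisymm (hx _ h2) (hy _ h1)
  subst e
  exact ⟨rfl, (Multiset.cons_inj_right x).1 h⟩

theorem aux_max {x y : ℕ} {S T : Multiset ℕ} (h : x ::ₘ S = y ::ₘ T)
    (hx : ∀ z ∈ S, z ≤ x) (hy : ∀ z ∈ T, z ≤ y) : x = y ∧ S = T := by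
  have e : x = y := by
    have h1 : x ∈ y ::ₘ T := h ▸ Multiset.mem_cons_self x S
    have h2 : y ∈ x ::ₘ S := h ▸ Multiset.mem_cons_self y T
    rcases Multiset.mem_cons.1 h1 with h1 | h1
    · exact h1
    · rcases Multiset.mem_cons.1 h2 with h2 | h2
      · exact h2.symm
      · exact le_antisymm (hy _ h1) (hx _ h2)
  subst e
  exact ⟨rfl, (Multiset.cons_inj_right x).1 h⟩

theorem aux_b1 {a b c d e : ℕ} (h1 : a ≤ b) (h2 : b ≤ c) (h3 : c ≤ d) (h4 : d ≤ e) :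
    (∀ z ∈ (a*c) ::ₘ (d*e) ::ₘ (c*e) ::ₘ (a*d) ::ₘ (a*e) ::ₘ (b*c) ::ₘ (b*d) ::ₘ (b*e)
        ::ₘ (c*d) ::ₘ 0, a*b ≤ z) ∧
    (∀ z ∈ (d*e) ::ₘ (c*e) ::ₘ (a*d) ::ₘ (a*e) ::ₘ (b*c) ::ₘ (b*d) ::ₘ (b*e)
        ::ₘ (c*d) ::ₘ 0, a*c ≤ z) ∧
    (∀ z ∈ (c*e) ::ₘ (a*d) ::ₘ (a*e) ::ₘ (b*c) ::ₘ (b*d) ::ₘ (b*e)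
        ::ₘ (c*d) ::ₘ 0, z ≤ d*e) ∧
    (∀ z ∈ (a*d) ::ₘ (a*e) ::ₘ (b*c) ::ₘ (b*d) ::ₘ (b*e)
        ::ₘ (c*d) ::ₘ (0 : Multiset ℕ), z ≤ c*e) := by
  simp only [Multiset.mem_cons, Multiset.notMem_zero, or_false, forall_eq_or_imp, forall_eq]
  have f : ∀ {x y z w : ℕ}, x ≤ z → y ≤ w → x * y ≤ z * w := fun p q => Nat.mul_le_mul p q
  have f2 : ∀ {x y z w : ℕ}, x ≤ w → y ≤ z → x * y ≤ z * w :=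
    fun p q => (Nat.mul_le_mul p q).trans (Nat.mul_comm _ _).le
  refine ⟨⟨?_, ?_, ?_, ?_, ?_, ?_, ?_, ?_, ?_⟩, ⟨?_, ?_, ?_, ?_, ?_, ?_, ?_, ?_⟩,
    ⟨?_, ?_, ?_, ?_, ?_, ?_, ?_⟩, ⟨?_, ?_, ?_, ?_, ?_, ?_⟩⟩ <;>
  first
    | exact f (by omega) (by omega)
    | exact f2 (by omega) (by omega)

theorem stmt_14 (n : ℕ) (hn : 1 ≤ n) :
    ∀ lam mu : Multiset ℕ,
      (∀ x ∈ lam, 0 < x) → lam.sum = n → lam.card = 5 →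
      (∀ x ∈ mu, 0 < x) → mu.sum = n → mu.card = 5 →
      preK 2 lam = preK 2 mu → lam = mu := by
  intro lam mu hl _ cl hm _ cm h
  obtain ⟨a, b, c, d, e, rfl, ha, h1, h2, h3, h4⟩ := aux_five lam cl hl
  obtain ⟨a', b', c', d', e', rfl, ha', h1', h2', h3', h4'⟩ := aux_five mu cm hm
  rw [aux_pre, aux_pre] at h
  obtain ⟨p1, p2, p3, p4⟩ := aux_b1 h1 h2 h3 h4
  obtain ⟨q1, q2, q3, q4⟩ := aux_b1 h1' h2' h3' h4'
  have hprod := congrArg Multiset.prod h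
  simp only [Multiset.prod_cons, Multiset.prod_zero] at hprod
  obtain ⟨e1, h⟩ := aux_min h p1 q1
  obtain ⟨e2, h⟩ := aux_min h p2 q2
  obtain ⟨e3, h⟩ := aux_max h p3 q3
  obtain ⟨e4, h⟩ := aux_max h p4 q4
  have hP : a*b*(d*e)*c = a'*b'*(d'*e')*c' := by
    have : (a*b*(d*e)*c)^4 = (a'*b'*(d'*e')*c')^4 := by linear_combination hprod
    exact Nat.pow_left_injective (by norm_num : 4 ≠ 0) this
  rw [← e1, ← e3] at hP
  have hc : c = c' := Nat.eq_of_mul_eq_mul_left (by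
    have : 0 < b := by omega
    have : 0 < d := by omega
    have : 0 < e := by omega
    positivity) hP
  subst hc
  have hc0 : 0 < c := by omega
  have ea : a = a' := Nat.eq_of_mul_eq_mul_right hc0 e2
  have ee : e = e' := Nat.eq_of_mul_eq_mul_left hc0 e4
  subst ea ee
  have eb : b = b' := Nat.eq_of_mul_eq_mul_left ha e1
  have ed : d = d' := Nat.eq_of_mul_eq_mul_right (by omega) e3
  subst eb ed
  rfl
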